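/- For every real d with 0 ≤ d < 4/5, the function (x,y) ↦ x^{3-3d} y^{1-d} (1-xy)^{-d} · ₂F₁(1,d;2-d;x) · ₂F₁(1,d;2-d;y) is integrable on the open unit square (0,1) × (0,1). -/

import Mathlib

open Real MeasureTheory

/-- Pochhammer symbol `(a)_k = a (a+1) ⋯ (a+k-1)` for real `a`. -/
noncomputable def poch (a : ℝ) (k : ℕ) : ℝ := (ascPochhammer ℝ k).eval a

/-- Gaussian hypergeometric function `₂F₁(a,b;c;z)`. -/
noncomputable def hyp2F1 (a b c z : ℝ) : ℝ :=
  ∑' k : ℕ, (poch a k * poch b k) / poch c k * z ^ k / (Nat.factorial k)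

/-- Generalized hypergeometric function `₃F₂(a₁,a₂,a₃;b₁,b₂;z)`. -/
noncomputable def hyp3F2 (a₁ a₂ a₃ b₁ b₂ z : ℝ) : ℝ :=
  ∑' k : ℕ, (poch a₁ k * poch a₂ k * poch a₃ k) / (poch b₁ k * poch b₂ k) * z ^ k /
    (Nat.factorial k)

/-- Generalized hypergeometric function `₄F₃(a₁,a₂,a₃,a₄;b₁,b₂,b₃;z)`. -/
noncomputable def hyp4F3 (a₁ a₂ a₃ a₄ b₁ b₂ b₃ z : ℝ) : ℝ :=
  ∑' k : ℕ, (poch a₁ k * poch a₂ k * poch a₃ k * poch a₄ k) /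
    (poch b₁ k * poch b₂ k * poch b₃ k) * z ^ k / (Nat.factorial k)

/-
The only singularities are at `x = 1` and `y = 1`. Comparing consecutive Taylor coefficients with
those of `(1 - z) ^ (-e)` gives `|₂F₁(a, b; c; z)| ≤ C (1 - |z|) ^ (-e)` for every
`e > max 0 (a + b - c)`, which here means `e > max 0 (2 * d - 1)`. The factor `(1 - x y) ^ (-d)` is
shared evenly between the two variables: with `δ = max d 0`, it is at most
`(1 - x) ^ (-δ / 2) (1 - y) ^ (-δ / 2)`. What remains is a product of two beta integrals, convergent
as soon as `e + δ / 2 < 1`, and such an `e` exists because `d < 4 / 5`.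
-/

open Filter Asymptotics
open scoped Nat

lemma isBigO_nat_atTop_of_ratio_le {E : Type*} [SeminormedAddCommGroup E] {u : ℕ → E} {v : ℕ → ℝ}
    (hv : ∀ᶠ k in atTop, 0 < v k)
    (huv : ∀ᶠ k in atTop, ‖u (k + 1)‖ * v k ≤ ‖u k‖ * v (k + 1)) : u =O[atTop] v := by
  obtain ⟨N, hN⟩ := eventually_atTop.1 (hv.and huv)
  have ratio_antitone : AntitoneOn (fun k ↦ ‖u k‖ / v k) (Set.Ici N) :=
    antitoneOn_nat_Ici_of_succ_le fun k hk ↦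
      (div_le_div_iff₀ (hN (k + 1) (by lia)).1 (hN k hk).1).2 (hN k hk).2
  refine IsBigO.of_bound (‖u N‖ / v N) ?_
  filter_upwards [eventually_ge_atTop N] with k hk
  rw [Real.norm_of_nonneg (hN k hk).1.le, ← div_le_iff₀ (hN k hk).1]
  exact ratio_antitone Set.self_mem_Ici hk hk

section Hypergeometric

variable {a b c e x : ℝ}

lemma poch_succ (a : ℝ) (k : ℕ) : poch a (k + 1) = poch a k * (a + k) := by
  simp only [poch, ascPochhammer_succ_eval]

lemma poch_pos (ha : 0 < a) (k : ℕ) : 0 < poch a k := ascPochhammer_pos k a ha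

lemma hasSum_poch_div_factorial_mul_pow (e : ℝ) (hx : |x| < 1) :
    HasSum (fun k : ℕ ↦ poch e k / k ! * x ^ k) ((1 - x) ^ (-e)) := by
  have hx_ball : x ∈ Metric.eball (0 : ℝ) 1 := by simpa [enorm_eq_nnnorm, ← NNReal.coe_lt_coe]
  have hchoose (k : ℕ) : Ring.choose (e + k - 1) k = poch e k / k ! := by
    rw [Ring.choose_eq_smul, Polynomial.descPochhammer_smeval_eq_ascPochhammer,
      Polynomial.ascPochhammer_smeval_eq_eval, poch, smul_eq_mul, inv_mul_eq_div]
    congr 2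
    ring
  simpa [FormalMultilinearSeries.ofScalars, hchoose,
    rpow_neg (sub_nonneg.2 (le_of_abs_le hx.le))] using
    (one_div_one_sub_rpow_hasFPowerSeriesOnBall_zero e).hasSum hx_ball

lemma hyp2F1_eq_tsum (a b c x : ℝ) :
    hyp2F1 a b c x = ∑' k : ℕ, ordinaryHypergeometricCoefficient a b c k * x ^ k :=
  tsum_congr fun k ↦ by simp only [poch]; ring

lemma measurable_hyp2F1 (a b c : ℝ) : Measurable (hyp2F1 a b c) :=
  Measurable.tsum fun k ↦ by fun_prop

lemma ordinaryHypergeometricCoefficient_succ (a b c : ℝ) (k : ℕ) :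
    ordinaryHypergeometricCoefficient a b c (k + 1) =
      ordinaryHypergeometricCoefficient a b c k * ((a + k) * (b + k) / ((c + k) * (k + 1))) := by
  simp only [ordinaryHypergeometricCoefficient, ascPochhammer_succ_eval, Nat.factorial_succ,
    Nat.cast_mul, Nat.cast_succ, mul_inv, div_eq_mul_inv]
  ring

lemma eventually_hypergeometric_ratio_le (he : a + b - c < e) :
    ∀ᶠ k : ℕ in atTop, ‖(a + k) * (b + k) / ((c + k) * (k + 1))‖ ≤ (e + k) / (k + 1) := by
  have eventually_le (t : ℝ) : ∀ᶠ k : ℕ in atTop, t ≤ k :=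
    tendsto_natCast_atTop_atTop.eventually_ge_atTop t
  filter_upwards [eventually_le (-a), eventually_le (-b), eventually_le (1 - c),
    eventually_le ((a * b - e * c) / (e - (a + b - c)))] with k hka hkb hkc hk
  have cross_mul : (a + k) * (b + k) ≤ (e + k) * (c + k) := by
    rw [div_le_iff₀ (sub_pos.2 he)] at hk
    linarith
  have hck : 0 < c + k := by linarith
  rw [Real.norm_of_nonneg (div_nonneg (mul_nonneg (by linarith) (by linarith)) (by positivity)),
    ← div_div]
  gcongr
  rwa [div_le_iff₀ hck]

lemma ordinaryHypergeometricCoefficient_isBigO (he₀ : 0 < e) (he : a + b - c < e) :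
    ordinaryHypergeometricCoefficient a b c =O[atTop] fun k : ℕ ↦ poch e k / k ! := by
  have binomial_pos (k : ℕ) : 0 < poch e k / k ! := div_pos (poch_pos he₀ k) (by positivity)
  refine isBigO_nat_atTop_of_ratio_le (.of_forall binomial_pos) ?_
  filter_upwards [eventually_hypergeometric_ratio_le he] with k hk
  have binomial_succ : poch e (k + 1) / (k + 1)! = (e + k) / (k + 1) * (poch e k / k !) := by
    rw [poch_succ, Nat.factorial_succ, Nat.cast_mul, Nat.cast_succ]
    field_simp
  rw [ordinaryHypergeometricCoefficient_succ, norm_mul, binomial_succ, mul_assoc]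
  have := binomial_pos k
  gcongr

lemma exists_forall_abs_hyp2F1_le (he₀ : 0 < e) (he : a + b - c < e) :
    ∃ C, ∀ x : ℝ, |x| < 1 → |hyp2F1 a b c x| ≤ C * (1 - |x|) ^ (-e) := by
  obtain ⟨C, -, hC⟩ := bound_of_isBigO_nat_atTop (ordinaryHypergeometricCoefficient_isBigO he₀ he)
  refine ⟨C, fun x hx ↦ ?_⟩
  rw [hyp2F1_eq_tsum]
  refine tsum_of_norm_bounded (E := ℝ)
    ((hasSum_poch_div_factorial_mul_pow e ((abs_abs x).trans_lt hx)).mul_left C) fun k ↦ ?_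
  have binomial_pos : 0 < poch e k / k ! := div_pos (poch_pos he₀ k) (by positivity)
  rw [norm_mul, norm_pow, Real.norm_eq_abs x, ← mul_assoc]
  gcongr
  simpa only [Real.norm_of_nonneg binomial_pos.le] using hC binomial_pos.ne'

end Hypergeometric

section Integrability

variable {a b c d r s α β : ℝ}

lemma integrableOn_rpow_mul_one_sub_rpow (hs : -1 < s) (hr : -1 < r) :
    IntegrableOn (fun x : ℝ ↦ x ^ s * (1 - x) ^ r) (Set.Ioo 0 1) := by
  have beta_integrableOn := ((intervalIntegrable_iff_integrableOn_Ioo_of_le zero_le_one).1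
    (Complex.betaIntegral_convergent (u := (s + 1 : ℝ)) (v := (r + 1 : ℝ))
      (by simpa using by linarith) (by simpa using by linarith))).norm
  refine IntegrableOn.congr_fun beta_integrableOn (fun x ⟨hx₀, hx₁⟩ ↦ ?_) measurableSet_Ioo
  have hx₁' : 0 < 1 - x := sub_pos.2 hx₁
  have hx_cast : (1 - x : ℂ) = (1 - x : ℝ) := by push_cast; rfl
  rw [norm_mul, hx_cast, Complex.norm_cpow_eq_rpow_re_of_pos hx₀,
    Complex.norm_cpow_eq_rpow_re_of_pos hx₁']
  simp

lemma integrableOn_rpow_mul_hyp2F1_mul_one_sub_rpow (hs : -1 < s) (hr : -1 < r)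
    (habc : a + b - c < 1 + r) :
    IntegrableOn (fun x : ℝ ↦ x ^ s * hyp2F1 a b c x * (1 - x) ^ r) (Set.Ioo 0 1) := by
  obtain ⟨e, he, her⟩ := exists_between (max_lt (by linarith : 0 < 1 + r) habc)
  obtain ⟨he₀, heabc⟩ := max_lt_iff.1 he
  obtain ⟨C, hC⟩ := exists_forall_abs_hyp2F1_le he₀ heabc
  have majorant_integrable :=
    (integrableOn_rpow_mul_one_sub_rpow hs (by linarith : -1 < r - e)).const_mul C
  have hmeas := measurable_hyp2F1 a b c
  refine Integrable.mono' majorant_integrable (by fun_prop)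
    (ae_restrict_of_forall_mem measurableSet_Ioo fun x ⟨hx₀, hx₁⟩ ↦ ?_)
  have hx₁' : 0 < 1 - x := sub_pos.2 hx₁
  have hyp_le := hC x (abs_lt.2 ⟨by linarith, hx₁⟩)
  rw [abs_of_pos hx₀] at hyp_le
  calc ‖x ^ s * hyp2F1 a b c x * (1 - x) ^ r‖
      = x ^ s * |hyp2F1 a b c x| * (1 - x) ^ r := by
        simp only [norm_mul, Real.norm_eq_abs, abs_rpow_of_nonneg, abs_of_pos, hx₀.le, hx₁'.le,
          hx₀, hx₁']
    _ ≤ x ^ s * (C * (1 - x) ^ (-e)) * (1 - x) ^ r := by gcongr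
    _ = C * (x ^ s * (1 - x) ^ (r - e)) := by rw [sub_eq_neg_add r, rpow_add hx₁']; ring

lemma one_sub_mul_rpow_neg_mul_le_one {x y : ℝ} (hx : x ∈ Set.Ico 0 1) (hy : y ∈ Set.Ico 0 1)
    (hα : 0 ≤ α) (hβ : 0 ≤ β) (hd : d ≤ α + β) :
    (1 - x * y) ^ (-d) * ((1 - x) ^ α * (1 - y) ^ β) ≤ 1 := by
  have hx' : 0 < 1 - x := sub_pos.2 hx.2
  have hy' : 0 < 1 - y := sub_pos.2 hy.2
  have hxy_le_x : x * y ≤ x := mul_le_of_le_one_right hx.1 hy.2.le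
  have hxy_le_y : x * y ≤ y := mul_le_of_le_one_left hy.1 hx.2.le
  have hxy : 0 < 1 - x * y := by linarith
  calc (1 - x * y) ^ (-d) * ((1 - x) ^ α * (1 - y) ^ β)
      ≤ (1 - x * y) ^ (-d) * ((1 - x * y) ^ α * (1 - x * y) ^ β) := by gcongr
    _ = (1 - x * y) ^ (-d + (α + β)) := by rw [rpow_add hxy, rpow_add hxy]
    _ ≤ 1 := rpow_le_one hxy.le (sub_le_self _ (mul_nonneg hx.1 hy.1)) (by linarith)

lemma integrableOn_one_sub_mul_rpow_neg_mul {f g : ℝ → ℝ} (hα : 0 ≤ α) (hβ : 0 ≤ β)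
    (hd : d ≤ α + β) (hf : IntegrableOn (fun x ↦ f x * (1 - x) ^ (-α)) (Set.Ioo 0 1))
    (hg : IntegrableOn (fun y ↦ g y * (1 - y) ^ (-β)) (Set.Ioo 0 1)) :
    IntegrableOn (fun p : ℝ × ℝ ↦ (1 - p.1 * p.2) ^ (-d) * (f p.1 * g p.2))
      (Set.Ioo 0 1 ×ˢ Set.Ioo 0 1) := by
  have square_measurable : MeasurableSet (Set.Ioo (0 : ℝ) 1 ×ˢ Set.Ioo (0 : ℝ) 1) :=
    measurableSet_Ioo.prod measurableSet_Ioo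
  have product_integrable := hf.mul_prod hg
  rw [Measure.prod_restrict, ← Measure.volume_eq_prod] at product_integrable
  have bounded_mul_integrable := product_integrable.bdd_mul (c := 1)
    (f := fun p ↦ (1 - p.1 * p.2) ^ (-d) * ((1 - p.1) ^ α * (1 - p.2) ^ β)) (by fun_prop)
    (ae_restrict_of_forall_mem square_measurable fun ⟨x, y⟩ ⟨hx, hy⟩ ↦ ?_)
  · refine IntegrableOn.congr_fun bounded_mul_integrable (fun ⟨x, y⟩ ⟨hx, hy⟩ ↦ ?_)
      square_measurable
    have hx' : (1 - x) ^ α ≠ 0 := (rpow_pos_of_pos (sub_pos.2 hx.2) α).ne'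
    have hy' : (1 - y) ^ β ≠ 0 := (rpow_pos_of_pos (sub_pos.2 hy.2) β).ne'
    simp only [rpow_neg (sub_pos.2 hx.2).le α, rpow_neg (sub_pos.2 hy.2).le β]
    field_simp
  · have hxy : 0 ≤ 1 - x * y := sub_nonneg.2 (mul_le_one₀ hx.2.le hy.1.le hy.2.le)
    rw [Real.norm_of_nonneg (mul_nonneg (rpow_nonneg hxy _) (mul_nonneg
      (rpow_nonneg (sub_nonneg.2 hx.2.le) _) (rpow_nonneg (sub_nonneg.2 hy.2.le) _)))]
    exact one_sub_mul_rpow_neg_mul_le_one (Set.Ioo_subset_Ico_self hx)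
      (Set.Ioo_subset_Ico_self hy) hα hβ hd

end Integrability

theorem integrableOn_unit_square_general (d : ℝ) (hd : d < 4 / 5) :
    IntegrableOn
      (fun p : ℝ × ℝ =>
        p.1 ^ (3 - 3 * d) * p.2 ^ (1 - d) * (1 - p.1 * p.2) ^ (-d) *
          hyp2F1 1 d (2 - d) p.1 * hyp2F1 1 d (2 - d) p.2)
      (Set.Ioo (0 : ℝ) 1 ×ˢ Set.Ioo (0 : ℝ) 1) := by
  set δ := max d 0
  have hdδ : d ≤ δ := le_max_left d 0
  have hδ₀ : 0 ≤ δ / 2 := div_nonneg (le_max_right d 0) zero_le_two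
  have hδ : δ < 4 / 5 := max_lt hd (by norm_num)
  have factor_integrableOn {s : ℝ} (hs : -1 < s) :
      IntegrableOn (fun x : ℝ ↦ x ^ s * hyp2F1 1 d (2 - d) x * (1 - x) ^ (-(δ / 2)))
        (Set.Ioo 0 1) :=
    integrableOn_rpow_mul_hyp2F1_mul_one_sub_rpow hs (by linarith) (by linarith)
  convert integrableOn_one_sub_mul_rpow_neg_mul (d := d) hδ₀
    hδ₀ (by linarith) (factor_integrableOn (s := 3 - 3 * d) (by linarith))
    (factor_integrableOn (s := 1 - d) (by linarith)) using 2
  ring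

theorem integrableOn_unit_square (d : ℝ) (hd0 : 0 ≤ d) (hd1 : d < 4 / 5) :
    IntegrableOn
      (fun p : ℝ × ℝ =>
        p.1 ^ (3 - 3 * d) * p.2 ^ (1 - d) * (1 - p.1 * p.2) ^ (-d) *
          hyp2F1 1 d (2 - d) p.1 * hyp2F1 1 d (2 - d) p.2)
      (Set.Ioo (0:ℝ) 1 ×ˢ Set.Ioo (0:ℝ) 1) :=
  integrableOn_unit_square_general d hd1
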